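/- arXiv:1411.2397 — 3 statements merged into one kernel-verified Lean document; each statement's English description precedes it below -/
import Mathlib

section
/- Let K be a field of characteristic ≠ 2 and A, B, D ∈ K with D ≠ 0. Then S^{(D;A,B)} has at most finitely many singular points: the set of points (t0:…:t4) ∈ P^4(K̄), over an algebraic closure K̄ of K, that lie on S^{(D;A,B)} and are singular, is finite. -/
open IsDedekindDomain NumberField

/-- The affine equations defining the surface `S^{(D;A,B)}`:
`t0·t1 = t2² − D·t3²` and `(t0 + A·t1)(t0 + B·t1) = t2² − D·t4²`. -/
def SPoint {F : Type*} [Field F] (A B D : F) (t : Fin 5 → F) : Prop :=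
  t 0 * t 1 = t 2 ^ 2 - D * t 3 ^ 2 ∧
  (t 0 + A * t 1) * (t 0 + B * t 1) = t 2 ^ 2 - D * t 4 ^ 2

/-- `S^{(D;A,B)}(F) ≠ ∅`: there is a nonzero solution of the two equations over `F`. -/
def HasPoint (F : Type*) [Field F] (A B D : F) : Prop :=
  ∃ t : Fin 5 → F, t ≠ 0 ∧ SPoint A B D t


/-- The Jacobian matrix of the two defining equations at a point `t`. -/
noncomputable def jacobian {F : Type*} [Field F] (A B D : F) (t : Fin 5 → F) :
    Matrix (Fin 2) (Fin 5) F :=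
  !![t 1, t 0, -2 * t 2, 2 * D * t 3, 0;
     2 * t 0 + (A + B) * t 1, (A + B) * t 0 + 2 * A * B * t 1, -2 * t 2, 0, 2 * D * t 4]

theorem minor_zero {F : Type*} [Field F] (M : Matrix (Fin 2) (Fin 5) F) (h : M.rank ≤ 1)
    (i j : Fin 5) : M 0 i * M 1 j = M 0 j * M 1 i := by
  have hl : ¬ LinearIndependent F M.row := by
    intro hl
    have := hl.rank_matrix
    simp at this
    omega
  rw [Fintype.not_linearIndependent_iff] at hl
  obtain ⟨g, hg, k, hk⟩ := hl
  have e : ∀ l, g 0 * M 0 l + g 1 * M 1 l = 0 := by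
    intro l
    have := congrFun hg l
    simpa [Fin.sum_univ_two, Matrix.row] using this
  have ei := e i
  have ej := e j
  have : g k * (M 0 i * M 1 j - M 0 j * M 1 i) = 0 := by
    fin_cases k
    · simp only [Fin.zero_eta]
      linear_combination M 1 j * ei - M 1 i * ej
    · simp only [Fin.mk_one]
      linear_combination M 0 i * ej - M 0 j * ei
  rcases mul_eq_zero.mp this with h | h
  · exact absurd h hk
  · exact sub_eq_zero.mp h

theorem one_ne {F : Type*} [Field F] (a b c : F) : (![a, 1, b, c, 0] : Fin 5 → F) ≠ 0 := by
  intro h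
  have := congrFun h 1
  simp at this

/-- A singular point has `t1 ≠ 0`, and the other coordinates are determined by `t1` up to
finitely many choices. -/
theorem singular_cases {F : Type*} [Field F] (h2 : (2 : F) ≠ 0) (A B D : F) (hD : D ≠ 0)
    (t : Fin 5 → F) (ht : t ≠ 0) (hS : SPoint A B D t) (hr : (jacobian A B D t).rank ≤ 1) :
    t 1 ≠ 0 ∧ t 4 = 0 ∧
      ((t 0 = 0 ∧ t 2 = 0 ∧ t 3 = 0) ∨
       (2 * t 0 = -(A + B) * t 1 ∧ t 2 = 0 ∧ D * t 3 ^ 2 = - (t 0 * t 1)) ∨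
       (2 * t 0 = (1 - A - B) * t 1 ∧ t 3 = 0 ∧ t 2 ^ 2 = t 0 * t 1)) := by
  obtain ⟨e1, e2⟩ := hS
  have m := minor_zero _ hr
  have m23 := m 2 3
  have m24 := m 2 4
  have m34 := m 3 4
  have m03 := m 0 3
  have m04 := m 0 4
  have m14 := m 1 4
  have m02 := m 0 2
  simp [jacobian, h2, hD] at m23 m24 m34 m03 m04 m14 m02
  have ht' : ¬ (t 0 = 0 ∧ t 1 = 0 ∧ t 2 = 0 ∧ t 3 = 0 ∧ t 4 = 0) := by
    rintro ⟨h0, h1, h2, h3, h4⟩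
    apply ht
    funext i
    fin_cases i <;> assumption
  have h4 : t 4 = 0 := by
    by_contra h4
    simp [h4] at m24 m34 m04 m14
    simp [m04, m14, m24, hD, h4] at e2
  by_cases h3 : t 3 = 0
  · by_cases h2' : t 2 = 0
    · simp [h2', h3, h4] at e1 e2 ht'
      grind
    · refine ⟨?_, h4, Or.inr (Or.inr ⟨?_, h3, ?_⟩)⟩
      · intro h1
        simp [h1, h3] at e1
        grind
      · grind
      · grind
  · refine ⟨?_, h4, Or.inr (Or.inl ⟨?_, ?_, ?_⟩)⟩ <;> grind

theorem singular_finite {F : Type*} [Field F] [IsAlgClosed F] (h2 : (2 : F) ≠ 0) (A B D : F)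
    (hD : D ≠ 0) :
    {p : Projectivization F (Fin 5 → F) |
      ∃ (t : Fin 5 → F) (ht : t ≠ 0), p = Projectivization.mk F t ht ∧
        SPoint A B D t ∧ (jacobian A B D t).rank ≤ 1}.Finite := by
  obtain ⟨r, hr⟩ := IsAlgClosed.exists_pow_nat_eq ((A + B) / 2 / D) (n := 2) (by norm_num)
  obtain ⟨s, hs⟩ := IsAlgClosed.exists_pow_nat_eq ((1 - A - B) / 2) (n := 2) (by norm_num)
  let m (a b c : F) : Projectivization F (Fin 5 → F) :=
    Projectivization.mk F ![a, 1, b, c, 0] (one_ne a b c)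
  refine Set.Finite.subset (s := {m 0 0 0, m (-(A + B) / 2) 0 r, m (-(A + B) / 2) 0 (-r),
    m ((1 - A - B) / 2) s 0, m ((1 - A - B) / 2) (-s) 0}) (Set.toFinite _) ?_
  rintro p ⟨t, ht, rfl, hS, hR⟩
  obtain ⟨h1, h4, h⟩ := singular_cases h2 A B D hD t ht hS hR
  have key : ∀ a b c : F, t 0 = t 1 * a → t 2 = t 1 * b → t 3 = t 1 * c →
      Projectivization.mk F t ht = m a b c := by
    intro a b c ha hb hc
    rw [Projectivization.mk_eq_mk_iff']
    refine ⟨t 1, ?_⟩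
    funext i
    fin_cases i <;> simp [ha, hb, hc, h4]
  simp only [Set.mem_insert_iff, Set.mem_singleton_iff]
  rcases h with ⟨h0, h2', h3⟩ | ⟨h0, h2', h3⟩ | ⟨h0, h3, h2'⟩
  · left
    apply key <;> simp [*]
  · have e0 : t 0 = t 1 * (-(A + B) / 2) := by field_simp; linear_combination h0
    have : t 3 ^ 2 = (t 1 * r) ^ 2 := by
      rw [mul_pow, hr]
      rw [e0] at h3
      field_simp
      field_simp at h3
      linear_combination h3
    rcases sq_eq_sq_iff_eq_or_eq_neg.mp this with h | h
    · right; left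
      exact key _ _ _ e0 (by simp [h2']) h
    · right; right; left
      exact key _ _ _ e0 (by simp [h2']) (by simp [h])
  · have e0 : t 0 = t 1 * ((1 - A - B) / 2) := by field_simp; linear_combination h0
    have : t 2 ^ 2 = (t 1 * s) ^ 2 := by
      rw [mul_pow, hs, h2', e0]
      ring
    rcases sq_eq_sq_iff_eq_or_eq_neg.mp this with h | h
    · right; right; right; left
      exact key _ _ _ e0 h (by simp [h3])
    · right; right; right; right
      exact key _ _ _ e0 (by simp [h]) (by simp [h3])

/-- Proposition 1 b): for `char K ≠ 2` and `D ≠ 0`, the surface `S^{(D;A,B)}` has at most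
finitely many singular points over an algebraic closure of `K`. -/
theorem finitely_many_singular_points (K : Type*) [Field K] (hchar : ringChar K ≠ 2)
    (A B D : K) (hD : D ≠ 0) :
    {p : Projectivization (AlgebraicClosure K) (Fin 5 → AlgebraicClosure K) |
      ∃ (t : Fin 5 → AlgebraicClosure K) (ht : t ≠ 0),
        p = Projectivization.mk (AlgebraicClosure K) t ht ∧
        SPoint (algebraMap K (AlgebraicClosure K) A) (algebraMap K (AlgebraicClosure K) B)
          (algebraMap K (AlgebraicClosure K) D) t ∧
        (jacobian (algebraMap K (AlgebraicClosure K) A) (algebraMap K (AlgebraicClosure K) B)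
          (algebraMap K (AlgebraicClosure K) D) t).rank ≤ 1}.Finite := by
  have h2 : (2 : K) ≠ 0 := Ring.two_ne_zero hchar
  have h2' : (2 : AlgebraicClosure K) ≠ 0 := by
    have := (map_ne_zero (algebraMap K (AlgebraicClosure K))).mpr h2
    rwa [map_ofNat] at this
  exact singular_finite h2' _ _ _ ((map_ne_zero (algebraMap K (AlgebraicClosure K))).mpr hD)
end

section
/- Let F be a finite field of characteristic ≠ 2 and A, B, D ∈ F with D ≠ 0. Then S^{(D;A,B)} has a regular F-rational point: there exists a nonzero tuple (t0,…,t4) ∈ F^5 satisfying both defining equations at which the 2×5 Jacobian matrix has rank 2. -/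
open IsDedekindDomain NumberField

theorem rank_two_of_minor {F : Type*} [Field F] (M : Matrix (Fin 2) (Fin 5) F) (i j : Fin 5)
    (h : M 0 i * M 1 j - M 0 j * M 1 i ≠ 0) : M.rank = 2 := by
  have hl : LinearIndependent F M.row := by
    have hM : M.row = ![M.row 0, M.row 1] := by
      funext k; fin_cases k <;> rfl
    rw [hM, LinearIndependent.pair_iff]
    intro s t hst
    have hi := congrFun hst i
    have hj := congrFun hst j
    simp only [Pi.add_apply, Pi.smul_apply, smul_eq_mul, Pi.zero_apply, Matrix.row] at hi hj
    constructor
    · apply (mul_eq_zero.mp (?_ : s * (M 0 i * M 1 j - M 0 j * M 1 i) = 0)).resolve_right h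
      linear_combination M 1 j * hi - M 1 i * hj
    · apply (mul_eq_zero.mp (?_ : t * (M 0 i * M 1 j - M 0 j * M 1 i) = 0)).resolve_right h
      linear_combination M 0 i * hj - M 0 j * hi
  simpa using hl.rank_matrix

/-- Affine criterion for a regular point in the chart `t1 = 1`. -/
theorem affine_point {F : Type*} [Field F] (h2 : (2 : F) ≠ 0) (A B D : F) (hD : D ≠ 0)
    (x u v w : F) (h1 : x = u ^ 2 - D * v ^ 2) (h3 : (x + A) * (x + B) = u ^ 2 - D * w ^ 2)
    (hns : ¬ (w = 0 ∧ x ^ 2 = A * B ∧ u = (2 * x + A + B) * u ∧ (2 * x + A + B) * v = 0)) :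
    ∃ t : Fin 5 → F, t ≠ 0 ∧ SPoint A B D t ∧ (jacobian A B D t).rank = 2 := by
  refine ⟨![x, 1, u, v, w], ?_, ?_, ?_⟩
  · intro h
    have := congrFun h 1
    simp at this
  · simp only [SPoint]
    constructor
    · simpa using h1
    · simpa using h3
  · by_contra hr
    apply hns
    have key : ∀ i j, jacobian A B D ![x, 1, u, v, w] 0 i * jacobian A B D ![x, 1, u, v, w] 1 j -
        jacobian A B D ![x, 1, u, v, w] 0 j * jacobian A B D ![x, 1, u, v, w] 1 i = 0 := by
      intro i j
      by_contra h
      exact hr (rank_two_of_minor _ i j h)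
    have k1 := key 0 1
    have k2 := key 0 2
    have k3 := key 0 3
    have k4 := key 0 4
    simp [jacobian] at k1 k2 k3 k4
    refine ⟨?_, ?_, ?_, ?_⟩
    · tauto
    · apply mul_left_cancel₀ h2
      linear_combination -k1
    · apply mul_left_cancel₀ h2
      linear_combination -k2
    · have h : (2 * x + A + B = 0) ∨ v = 0 := by
        rcases k3 with k3 | k3
        · tauto
        · left; linear_combination k3
      rcases h with h | h <;> simp [h]

theorem norm_surj {F : Type*} [Field F] [Fintype F] (hchar : ringChar F ≠ 2) (D : F) (hD : D ≠ 0)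
    (c : F) : ∃ u v : F, u ^ 2 - D * v ^ 2 = c := by
  obtain ⟨a, b, h⟩ := FiniteField.exists_root_sum_quadratic
    (f := (Polynomial.X ^ 2 - Polynomial.C c : Polynomial F))
    (g := (Polynomial.C (-D) * Polynomial.X ^ 2 : Polynomial F))
    (Polynomial.degree_X_pow_sub_C (by norm_num) c)
    (Polynomial.degree_C_mul_X_pow 2 (neg_ne_zero.mpr hD))
    (FiniteField.odd_card_of_char_ne_two hchar)
  simp at h
  exact ⟨a, b, by linear_combination h⟩

open MvPolynomial in
theorem cw_point {F : Type*} [Field F] [Fintype F] (A B D : F) :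
    ∃ t : Fin 5 → F, t ≠ 0 ∧ SPoint A B D t := by
  classical
  let f₁ : MvPolynomial (Fin 5) F := X 0 * X 1 - (X 2 ^ 2 - C D * X 3 ^ 2)
  let f₂ : MvPolynomial (Fin 5) F :=
    (X 0 + C A * X 1) * (X 0 + C B * X 1) - (X 2 ^ 2 - C D * X 4 ^ 2)
  have hX : ∀ i : Fin 5, (X i : MvPolynomial (Fin 5) F).totalDegree ≤ 1 :=
    fun i => (totalDegree_X i).le
  have hC : ∀ (a : F) (i : Fin 5) (k : ℕ), (C a * X i ^ k : MvPolynomial (Fin 5) F).totalDegree ≤ k := by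
    intro a i k
    refine (totalDegree_mul _ _).trans ?_
    rw [totalDegree_C, totalDegree_X_pow]; simp
  have hN : ∀ i : Fin 5, (X 2 ^ 2 - C D * X i ^ 2 : MvPolynomial (Fin 5) F).totalDegree ≤ 2 :=
    fun i => (totalDegree_sub _ _).trans (max_le (by rw [totalDegree_X_pow]) (hC D i 2))
  have hL : ∀ a : F, (X 0 + C a * X 1 : MvPolynomial (Fin 5) F).totalDegree ≤ 1 :=
    fun a => (totalDegree_add _ _).trans (max_le (hX 0) (by simpa using hC a 1 1))
  have d1 : f₁.totalDegree ≤ 2 := (totalDegree_sub _ _).trans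
    (max_le ((totalDegree_mul _ _).trans (add_le_add (hX 0) (hX 1))) (hN 3))
  have d2 : f₂.totalDegree ≤ 2 := (totalDegree_sub _ _).trans
    (max_le ((totalDegree_mul _ _).trans (add_le_add (hL A) (hL B))) (hN 4))
  have hdvd := char_dvd_card_solutions_of_add_lt (ringChar F) (f₁ := f₁) (f₂ := f₂)
    (by simp only [Fintype.card_fin]; omega)
  have hp : (ringChar F).Prime := CharP.char_is_prime F _
  let z : { x : Fin 5 → F // eval x f₁ = 0 ∧ eval x f₂ = 0 } := ⟨0, by simp [f₁, f₂]⟩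
  have hpos : 0 < Fintype.card { x : Fin 5 → F // eval x f₁ = 0 ∧ eval x f₂ = 0 } :=
    Fintype.card_pos_iff.mpr ⟨z⟩
  have hlt : 1 < Fintype.card { x : Fin 5 → F // eval x f₁ = 0 ∧ eval x f₂ = 0 } :=
    lt_of_lt_of_le hp.one_lt (Nat.le_of_dvd hpos hdvd)
  obtain ⟨⟨t, ht1, ht2⟩, hne⟩ := Fintype.exists_ne_of_one_lt_card hlt z
  refine ⟨t, fun h => hne (Subtype.ext h), ?_, ?_⟩
  · simp only [f₁, map_sub, map_mul, map_pow, eval_X, eval_C] at ht1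
    linear_combination ht1
  · simp only [f₂, map_sub, map_mul, map_pow, map_add, eval_X, eval_C] at ht2
    linear_combination ht2

/-- Corollary 6: over a finite field `F` of characteristic `≠ 2`, for any `A, B, D ∈ F`
with `D ≠ 0`, the surface `S^{(D;A,B)}` has a regular `F`-rational point. -/
theorem regular_point_over_finite_field (F : Type*) [Field F] [Fintype F]
    (hchar : ringChar F ≠ 2) (A B D : F) (hD : D ≠ 0) :
    ∃ t : Fin 5 → F, t ≠ 0 ∧ SPoint A B D t ∧ (jacobian A B D t).rank = 2 := by
  have h2 : (2 : F) ≠ 0 := Ring.two_ne_zero hchar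
  -- the chart `t1 = 0`
  have chart0 : ∀ t : Fin 5 → F, t 1 = 0 → t 0 ≠ 0 → SPoint A B D t →
      ∃ t : Fin 5 → F, t ≠ 0 ∧ SPoint A B D t ∧ (jacobian A B D t).rank = 2 := by
    intro t h1 h0 hS
    refine ⟨t, fun h => h0 (by simp [h]), hS, rank_two_of_minor _ 0 1 ?_⟩
    simp [jacobian, h1, h0, h2]
  by_cases hsq : IsSquare D
  · obtain ⟨d, rfl⟩ := hsq
    have hd : d ≠ 0 := by rintro rfl; simp at hD
    refine chart0 ![d, 0, d, 1, 0] (by simp) (by simpa using hd) ⟨?_, ?_⟩ <;> simp <;> ring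
  by_cases hsq' : IsSquare (-D)
  · obtain ⟨d, hd'⟩ := hsq'
    have hd : d ≠ 0 := by rintro rfl; simp at hd'; exact hD hd'
    refine chart0 ![d, 0, 0, 0, 1] (by simp) (by simpa using hd) ⟨?_, ?_⟩
    · simp
    · simp; exact hd'.symm
  have nsq : ∀ a b : F, a ^ 2 = D * b ^ 2 → b = 0 := by
    intro a b h
    by_contra hb
    exact hsq ⟨a / b, by field_simp; linear_combination -h⟩
  have nsq' : ∀ a b : F, a ^ 2 = -D * b ^ 2 → b = 0 := by
    intro a b h
    by_contra hb
    exact hsq' ⟨a / b, by field_simp; linear_combination -h⟩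
  by_cases hroot : ∃ x : F, x ^ 2 + (A + B - 1) * x + A * B = 0
  · by_cases hroot0 : ∃ x : F, x ≠ 0 ∧ x ^ 2 + (A + B - 1) * x + A * B = 0
    · obtain ⟨x, hx, hr⟩ := hroot0
      have : ∃ u v : F, u ^ 2 - D * v ^ 2 = x ∧ v ≠ 0 := by
        obtain ⟨u, v, h⟩ := norm_surj hchar D hD x
        by_cases hv : v = 0
        · subst hv
          have hu : u ≠ 0 := by rintro rfl; apply hx; rw [← h]; simp
          have hD1 : 1 - D ≠ 0 := by
            intro h; exact hsq ⟨1, by linear_combination -h⟩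
          refine ⟨u * (1 + D) / (1 - D), 2 * u / (1 - D), ?_, div_ne_zero (mul_ne_zero h2 hu) hD1⟩
          rw [← h]; field_simp; ring
        · exact ⟨u, v, h, hv⟩
      obtain ⟨u, v, h, hv⟩ := this
      exact affine_point h2 A B D hD x u v v h.symm (by linear_combination hr - h)
        (fun hh => hv hh.1)
    · push Not at hroot0
      obtain ⟨x, hx⟩ := hroot
      have hx0 : x = 0 := by
        by_contra h; exact hroot0 x h hx
      subst hx0
      have hAB : A * B = 0 := by linear_combination hx
      have hs : A + B = 1 := by
        by_contra h
        apply hroot0 (1 - A - B) (fun h' => h (by linear_combination -h'))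
        linear_combination hAB
      -- special case `{A, B} = {0, 1}`
      have h1D : D + 1 ≠ 0 := by
        intro h; exact hsq' ⟨1, by linear_combination -h⟩
      have h4 : (4 : F) ≠ 0 := by
        have : (4 : F) = 2 * 2 := by norm_num
        rw [this]; exact mul_ne_zero h2 h2
      -- parameters `y = 1`, `s = 0`
      obtain ⟨a, ha, hae⟩ : ∃ a : F, a ≠ 0 ∧ a * (D + 1) ^ 2 = -4 * D :=
        ⟨-4 * D / (D + 1) ^ 2, by
          apply div_ne_zero _ (pow_ne_zero _ h1D)
          exact mul_ne_zero (neg_ne_zero.mpr h4) hD, by field_simp⟩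
      refine affine_point h2 A B D hD a 0 (a * (D + 1) / (2 * D)) (a * (D - 1) / (2 * D)) ?_ ?_ ?_
      · field_simp
        linear_combination a * hae
      · field_simp
        linear_combination (4 * D * a) * hs + 4 * D * hAB + a * hae
      · rintro ⟨-, h, -⟩
        rw [hAB] at h
        exact ha (pow_eq_zero_iff (two_ne_zero) |>.mp h)
  · push Not at hroot
    have hAB : A * B ≠ 0 := fun h => hroot 0 (by linear_combination h)
    -- singular points have `u = 0` and `A = B`
    have sing : ∀ x u v w : F, x = u ^ 2 - D * v ^ 2 → (w = 0 ∧ x ^ 2 = A * B ∧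
        u = (2 * x + A + B) * u ∧ (2 * x + A + B) * v = 0) → u = 0 ∧ A = B := by
      rintro x u v w h1 ⟨-, hx, hu, hv⟩
      have hu0 : u = 0 := by
        by_contra h
        have hl : 2 * x + A + B = 1 := by
          apply mul_right_cancel₀ h
          linear_combination -hu
        exact hroot x (by linear_combination -hx + x * hl)
      refine ⟨hu0, ?_⟩
      have hv0 : v ≠ 0 := by
        rintro rfl
        subst hu0
        apply hAB
        rw [← hx, h1]; ring
      have hl := (mul_eq_zero.mp hv).resolve_right hv0
      have : (A - B) ^ 2 = 0 := by linear_combination (A + B - 2 * x) * hl + 4 * hx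
      exact sub_eq_zero.mp (pow_eq_zero_iff (two_ne_zero) |>.mp this)
    by_cases hEq : A = B
    · subst hEq
      obtain ⟨c, hc⟩ : ∃ c : F, 2 * c = 1 := ⟨2⁻¹, mul_inv_cancel₀ h2⟩
      obtain ⟨z, v, h⟩ := norm_surj hchar D hD (c ^ 2 - A)
      obtain ⟨y, hy, hyv⟩ : ∃ y : F, y ≠ 0 ∧ y ^ 2 - y + A = D * v ^ 2 := by
        by_cases hz : z + c = 0
        · exact ⟨1, one_ne_zero, by linear_combination h - (z - c) * hz⟩
        · exact ⟨z + c, hz, by linear_combination h + (z + c) * hc⟩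
      refine affine_point h2 A A D hD (y - A) y v 0 (by linear_combination -hyv) (by ring) ?_
      intro hh
      exact hy (sing (y - A) y v 0 (by linear_combination -hyv) hh).1
    · obtain ⟨t, ht, hS1, hS2⟩ := cw_point A B D
      have ht1 : t 1 ≠ 0 := by
        intro h
        rw [h] at hS1 hS2
        have h3 : t 3 = 0 := nsq (t 2) (t 3) (by linear_combination -hS1)
        have h2' : t 2 = 0 := by
          apply pow_eq_zero_iff (two_ne_zero) |>.mp
          rw [h3] at hS1
          linear_combination -hS1
        have h4 : t 4 = 0 := nsq' (t 0) (t 4) (by rw [h2'] at hS2; linear_combination hS2)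
        have h0 : t 0 = 0 := by
          apply pow_eq_zero_iff (two_ne_zero) |>.mp
          rw [h4, h2'] at hS2
          linear_combination hS2
        apply ht
        funext i
        fin_cases i
        · exact h0
        · exact h
        · exact h2'
        · exact h3
        · exact h4
      have e1 : t 0 / t 1 = (t 2 / t 1) ^ 2 - D * (t 3 / t 1) ^ 2 := by
        field_simp; linear_combination hS1
      refine affine_point h2 A B D hD (t 0 / t 1) (t 2 / t 1) (t 3 / t 1) (t 4 / t 1) e1 ?_ ?_
      · field_simp; linear_combination hS2
      · intro hh
        exact hEq (sing _ _ _ _ e1 hh).2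
end

section
/- Let F be a finite field of characteristic ≠ 2 with ℓ := #F ≥ 5 elements, and let A, B, D ∈ F with D ≠ 0. Then the number of regular F-rational points of S^{(D;A,B)}, i.e. the number of points (t0:…:t4) ∈ P^4(F) satisfying both defining equations at which the 2×5 Jacobian matrix has rank 2, is at least ℓ² − 4ℓ + 1. -/
open IsDedekindDomain NumberField

open Finset

section
variable {F : Type*} [Field F] [Fintype F] [DecidableEq F]

lemma aux_r1 (h2 : ringChar F ≠ 2) (c : F) :
    ∑ y : F, (if y ^ 2 = c then (1:ℤ) else 0) = quadraticChar F c + 1 := by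
  have := quadraticChar_card_sqrts h2 c
  rw [← this, Finset.sum_boole]
  congr 2
  ext x; simp

lemma aux_lin (b c : F) (hb : b ≠ 0) :
    ∑ x : F, (if b * x = c then (1:ℤ) else 0) = 1 := by
  rw [Finset.sum_eq_single (c / b)]
  · rw [if_pos]; field_simp
  · intro x _ hx
    rw [if_neg]
    rintro rfl
    apply hx; field_simp
  · simp

lemma aux_hyp (c : F) :
    ∑ x : F, ∑ y : F, (if y * x = c then (1:ℤ) else 0)
      = Fintype.card F - 1 + Fintype.card F * (if c = 0 then 1 else 0) := by
  have : ∀ x : F, ∑ y : F, (if y * x = c then (1:ℤ) else 0)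
      = 1 + (if x = 0 then (-1 + Fintype.card F * (if c = 0 then 1 else 0) : ℤ) else 0) := by
    intro x
    by_cases hx : x = 0
    · subst hx
      by_cases hc : c = 0
      · simp [hc]
      · simp [hc, Ne.symm hc]
    · simp only [hx, if_false, mul_comm _ x]
      rw [aux_lin x c hx]; simp
  simp only [this, Finset.sum_add_distrib, Finset.sum_ite_eq', Finset.sum_const, Finset.mem_univ,
    if_true, Finset.card_univ]
  simp; ring

lemma two_ne (h2 : ringChar F ≠ 2) : (2:F) ≠ 0 := Ring.two_ne_zero h2

lemma aux_chi (h2 : ringChar F ≠ 2) (c : F) :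
    ∑ x : F, quadraticChar F (x ^ 2 - c)
      = -1 + Fintype.card F * (if c = 0 then (1:ℤ) else 0) := by
  have h2' := two_ne h2
  have e1 : ∑ x : F, ∑ y : F, (if y ^ 2 = x ^ 2 - c then (1:ℤ) else 0)
      = ∑ x : F, quadraticChar F (x ^ 2 - c) + Fintype.card F := by
    simp only [aux_r1 h2, Finset.sum_add_distrib]; simp
  have e2 : ∑ x : F, ∑ y : F, (if y ^ 2 = x ^ 2 - c then (1:ℤ) else 0)
      = ∑ u : F, ∑ x : F, (if (2 * u) * x = -c - u ^ 2 then (1:ℤ) else 0) := by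
    rw [Finset.sum_comm (s := (univ : Finset F)) (t := univ)
      (f := fun u x => (if (2 * u) * x = -c - u ^ 2 then (1:ℤ) else 0))]
    refine Finset.sum_congr rfl fun x _ => ?_
    rw [← Equiv.sum_comp (Equiv.addLeft x)]
    refine Finset.sum_congr rfl fun u _ => ?_
    refine if_congr ?_ rfl rfl
    simp only [Equiv.coe_addLeft]
    constructor <;> intro h <;> linear_combination h
  have e3 : ∀ u : F, ∑ x : F, (if (2 * u) * x = -c - u ^ 2 then (1:ℤ) else 0)
      = 1 + (if u = 0 then (-1 + Fintype.card F * (if c = 0 then 1 else 0) : ℤ) else 0) := by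
    intro x
    by_cases hx : x = 0
    · subst hx
      by_cases hc : c = 0
      · simp [hc]
      · simp [hc, eq_comm]
    · rw [aux_lin _ _ (mul_ne_zero h2' hx)]; simp [hx]
  rw [e1] at e2
  simp only [e3, Finset.sum_add_distrib, Finset.sum_ite_eq', Finset.sum_const, Finset.mem_univ,
    if_true, Finset.card_univ] at e2
  simp only [nsmul_eq_mul, mul_one] at e2
  linarith

lemma aux_r2 (h2 : ringChar F ≠ 2) (a b c : F) (ha : a ≠ 0) (hb : b ≠ 0) :
    ∑ x : F, ∑ y : F, (if a * x ^ 2 + b * y ^ 2 = c then (1:ℤ) else 0)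
      = Fintype.card F + quadraticChar F (-(a * b)) *
        (-1 + Fintype.card F * (if c = 0 then (1:ℤ) else 0)) := by
  have e : ∀ x : F, ∑ y : F, (if a * x ^ 2 + b * y ^ 2 = c then (1:ℤ) else 0)
      = quadraticChar F (-(a * b)) * quadraticChar F (x ^ 2 - c / a) + 1 := by
    intro x
    have hq : quadraticChar F (-(a * b)) * quadraticChar F (x ^ 2 - c / a)
        = quadraticChar F ((c - a * x ^ 2) / b) := by
      rw [← map_mul]
      have : -(a * b) * (x ^ 2 - c / a) = (c - a * x ^ 2) / b * b ^ 2 := by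
        field_simp; ring
      rw [this, map_mul, quadraticChar_sq_one' hb, mul_one]
    rw [hq, ← aux_r1 h2]
    refine Finset.sum_congr rfl fun y _ => if_congr ?_ rfl rfl
    rw [eq_div_iff hb]
    constructor <;> intro h <;> linear_combination h
  simp only [e, Finset.sum_add_distrib, ← Finset.mul_sum, aux_chi h2]
  have : (c / a = 0) ↔ c = 0 := by simp [ha]
  simp [this]; ring

/-- zeros of the ternary form -/
def TT (a b c : F) : ℤ := ∑ y : F, ∑ z : F, ∑ u : F,
  (if a * y ^ 2 + b * z ^ 2 + c * u ^ 2 = 0 then (1:ℤ) else 0)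

lemma TT_symm (a b c : F) : TT a b c = TT b a c := by
  unfold TT
  rw [Finset.sum_comm]
  simp only [add_comm (a * _) (b * _)]

lemma TT_symm' (a b c : F) : TT a b c = TT a c b := by
  unfold TT
  refine Finset.sum_congr rfl fun y _ => ?_
  rw [Finset.sum_comm]
  simp only [add_assoc, add_comm (b * _) (c * _)]

lemma TT_val (h2 : ringChar F ≠ 2) (a b c : F) (ha : a ≠ 0) (hb : b ≠ 0) :
    TT a b c = if c = 0 then (Fintype.card F : ℤ) *
      (Fintype.card F + quadraticChar F (-(a * b)) * (Fintype.card F - 1))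
      else (Fintype.card F : ℤ) ^ 2 := by
  have e : TT a b c = ∑ u : F, ∑ y : F, ∑ z : F,
      (if a * y ^ 2 + b * z ^ 2 = - (c * u ^ 2) then (1:ℤ) else 0) := by
    unfold TT
    rw [Finset.sum_comm]
    rw [Finset.sum_comm]
    simp only [← eq_neg_iff_add_eq_zero]
    rw [Finset.sum_congr rfl fun y _ => Finset.sum_comm]
    rw [Finset.sum_comm]
  rw [e]
  simp only [aux_r2 h2 a b _ ha hb]
  by_cases hc : c = 0
  · simp [hc]; left; ring
  · simp [hc, Finset.sum_add_distrib, ← Finset.mul_sum]; ring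

lemma chi_cases (a : F) (ha : a ≠ 0) : quadraticChar F a = 1 ∨ quadraticChar F a = -1 :=
  quadraticChar_dichotomy ha

lemma TT_two (h2 : ringChar F ≠ 2) (a b : F) (ha : a ≠ 0) (hb : b ≠ 0) :
    |TT a b 0 - (Fintype.card F : ℤ) ^ 2| ≤ Fintype.card F * (Fintype.card F - 1) := by
  have hq : (1:ℤ) ≤ Fintype.card F := by exact_mod_cast Fintype.card_pos
  rw [TT_val h2 a b 0 ha hb, abs_le]
  rcases chi_cases (-(a * b)) (by simp [ha, hb]) with h | h <;> rw [h] <;> simp only [if_true] <;>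
    constructor <;> nlinarith

lemma TT_one (a : F) (ha : a ≠ 0) : TT a 0 0 = (Fintype.card F : ℤ) ^ 2 := by
  unfold TT
  simp [ha]
  ring

/-- zeros of the form in five variables -/
def ZZ (D a b c : F) : ℤ := ∑ y : F, ∑ z : F, ∑ u : F, ∑ x : F, ∑ w : F,
  (if 1 * x ^ 2 + D * w ^ 2 = -(a * y ^ 2 + b * z ^ 2 + c * u ^ 2) then (1:ℤ) else 0)

lemma ZZ_val (h2 : ringChar F ≠ 2) (D a b c : F) (hD : D ≠ 0) :
    ZZ D a b c = (Fintype.card F : ℤ) ^ 4 + quadraticChar F (-(1 * D)) * Fintype.card F *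
      (TT a b c - (Fintype.card F : ℤ) ^ 2) := by
  unfold ZZ TT
  simp only [aux_r2 h2 1 D _ one_ne_zero hD, Finset.sum_add_distrib, ← Finset.mul_sum, neg_eq_zero]
  simp
  ring

lemma TT_abs (h2 : ringChar F ≠ 2) (a b c : F) (h : a ≠ 0 ∨ b ≠ 0) :
    |TT a b c - (Fintype.card F : ℤ) ^ 2| ≤ Fintype.card F * (Fintype.card F - 1) := by
  have hq : (1:ℤ) ≤ Fintype.card F := by exact_mod_cast Fintype.card_pos
  have hq' : (0:ℤ) ≤ Fintype.card F * (Fintype.card F - 1) := by nlinarith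
  have key : ∀ a b c : F, a ≠ 0 →
      |TT a b c - (Fintype.card F : ℤ) ^ 2| ≤ Fintype.card F * (Fintype.card F - 1) := by
    intro a b c ha
    by_cases hb : b = 0 <;> by_cases hc : c = 0
    · subst hb hc; rw [TT_one a ha]; simpa using hq'
    · subst hb; rw [TT_symm']; exact TT_two h2 a c ha hc
    · subst hc; exact TT_two h2 a b ha hb
    · rw [TT_val h2 a b c ha hb]; simpa [hc] using hq'
  rcases h with h | h
  · exact key a b c h
  · rw [TT_symm]; exact key b a c h

lemma ZZ_low (h2 : ringChar F ≠ 2) (D a b c : F) (hD : D ≠ 0) (h : a ≠ 0 ∨ b ≠ 0) :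
    (Fintype.card F : ℤ) ^ 4 - (Fintype.card F : ℤ) ^ 2 * (Fintype.card F - 1) ≤ ZZ D a b c := by
  have hq : (1:ℤ) ≤ Fintype.card F := by exact_mod_cast Fintype.card_pos
  rw [ZZ_val h2 D a b c hD]
  have := abs_le.1 (TT_abs h2 a b c h)
  rcases chi_cases (-(1 * D)) (by simp [hD]) with h | h <;> rw [h] <;> nlinarith

lemma ZZ_eq (h2 : ringChar F ≠ 2) (D a b c : F) (hD : D ≠ 0)
    (h : (a ≠ 0 ∧ b ≠ 0 ∧ c ≠ 0) ∨ (a ≠ 0 ∧ b = 0 ∧ c = 0) ∨ (a = 0 ∧ b ≠ 0 ∧ c = 0)) :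
    ZZ D a b c = (Fintype.card F : ℤ) ^ 4 := by
  rw [ZZ_val h2 D a b c hD]
  have : TT a b c = (Fintype.card F : ℤ) ^ 2 := by
    rcases h with ⟨ha, hb, hc⟩ | ⟨ha, rfl, rfl⟩ | ⟨rfl, hb, rfl⟩
    · rw [TT_val h2 a b c ha hb, if_neg hc]
    · exact TT_one a ha
    · rw [TT_symm]; exact TT_one b hb
  rw [this]; ring

/-- first and second equation, variables ordered as `t2, t3, t1, t0, t4` -/
def QA (D : F) (p : F × F × F × F × F) : F :=
  p.2.2.2.1 * p.2.2.1 - (p.1 ^ 2 - D * p.2.1 ^ 2)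
def QB (A B D : F) (p : F × F × F × F × F) : F :=
  (p.2.2.2.1 + A * p.2.2.1) * (p.2.2.2.1 + B * p.2.2.1) - (p.1 ^ 2 - D * p.2.2.2.2 ^ 2)

lemma QA_low (h2 : ringChar F ≠ 2) (D : F) (hD : D ≠ 0) :
    (Fintype.card F : ℤ) ^ 4 - (Fintype.card F : ℤ) ^ 2 * (Fintype.card F - 1) ≤
      ∑ p : F × F × F × F × F, (if QA D p = 0 then (1:ℤ) else 0) := by
  have hq : (1:ℤ) ≤ Fintype.card F := by exact_mod_cast Fintype.card_pos
  have hD' : -D ≠ 0 := neg_ne_zero.2 hD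
  have e : ∑ p : F × F × F × F × F, (if QA D p = 0 then (1:ℤ) else 0)
      = (Fintype.card F : ℤ) ^ 4 + quadraticChar F (-(1 * -D)) * (Fintype.card F : ℤ) ^ 2
        * (Fintype.card F - 1) := by
    have e0 : ∑ p : F × F × F × F × F, (if QA D p = 0 then (1:ℤ) else 0)
        = ∑ y : F, ∑ z : F, ∑ u : F, ∑ x : F, ∑ _w : F,
          (if x * u = y ^ 2 - D * z ^ 2 then (1:ℤ) else 0) := by
      simp only [Fintype.sum_prod_type]
      refine Finset.sum_congr rfl fun y _ => Finset.sum_congr rfl fun z _ =>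
        Finset.sum_congr rfl fun u _ => Finset.sum_congr rfl fun x _ =>
        Finset.sum_congr rfl fun w _ => if_congr ?_ rfl rfl
      simp only [QA, sub_eq_zero]
    rw [e0]
    simp only [Finset.sum_const]
    simp only [nsmul_eq_mul, ← Finset.mul_sum, aux_hyp, Finset.sum_add_distrib]
    have := aux_r2 h2 1 (-D) 0 one_ne_zero hD'
    simp only [one_mul, neg_mul, ← sub_eq_add_neg] at this
    rw [this]
    simp
    ring
  rw [e]
  have : 0 ≤ (Fintype.card F : ℤ) ^ 2 * (Fintype.card F - 1) := by
    apply mul_nonneg (by positivity); linarith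
  rcases chi_cases (-(1 * -D)) (by simp [hD]) with h | h <;> rw [h] <;> nlinarith

def del (A B l : F) : F := A * B - ((l + A + B) / 2) ^ 2

lemma QL (h2 : ringChar F ≠ 2) (A B D l : F) :
    ∑ p : F × F × F × F × F, (if l * QA D p + QB A B D p = 0 then (1:ℤ) else 0)
      = ZZ D (-(l + 1)) (l * D) (del A B l) := by
  have h2' := two_ne h2
  simp only [Fintype.sum_prod_type, QA, QB, ZZ]
  refine Finset.sum_congr rfl fun y _ => Finset.sum_congr rfl fun z _ =>
    Finset.sum_congr rfl fun u _ => ?_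
  rw [← Equiv.sum_comp (Equiv.addRight (-((l + A + B) / 2 * u))) (fun x => ∑ w : F, _)]
  refine Finset.sum_congr rfl fun x _ => Finset.sum_congr rfl fun w _ => if_congr ?_ rfl rfl
  simp only [Equiv.coe_addRight, del]
  rw [← sub_eq_zero (b := -_)]
  have : l * ((x + -((l + A + B) / 2 * u)) * u - (y ^ 2 - D * z ^ 2)) +
      ((x + -((l + A + B) / 2 * u) + A * u) * (x + -((l + A + B) / 2 * u) + B * u) -
        (y ^ 2 - D * w ^ 2))
    = 1 * x ^ 2 + D * w ^ 2 - -(-(l + 1) * y ^ 2 + l * D * z ^ 2 +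
      (A * B - ((l + A + B) / 2) ^ 2) * u ^ 2) := by
    field_simp; ring
  rw [this]

lemma pencil (A B D : F) :
    ∑ p : F × F × F × F × F, (if QA D p = 0 then (1:ℤ) else 0) +
      ∑ l : F, ∑ p : F × F × F × F × F, (if l * QA D p + QB A B D p = 0 then (1:ℤ) else 0)
      = (Fintype.card F : ℤ) ^ 5 + Fintype.card F *
        ∑ p : F × F × F × F × F, (if QA D p = 0 ∧ QB A B D p = 0 then (1:ℤ) else 0) := by
  rw [Finset.sum_comm, ← Finset.sum_add_distrib]
  have : ∀ p : F × F × F × F × F, (if QA D p = 0 then (1:ℤ) else 0) +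
      ∑ l : F, (if l * QA D p + QB A B D p = 0 then (1:ℤ) else 0)
      = 1 + Fintype.card F * (if QA D p = 0 ∧ QB A B D p = 0 then (1:ℤ) else 0) := by
    intro p
    by_cases h : QA D p = 0
    · by_cases h' : QB A B D p = 0 <;> simp [h, h']
    · simp only [h, if_false, false_and]
      have := aux_lin (QA D p) (-QB A B D p) h
      simp only [eq_neg_iff_add_eq_zero, mul_comm (QA D p)] at this
      rw [this]; simp
  simp only [this, Finset.sum_add_distrib, ← Finset.mul_sum]
  simp
  ring

def EE (A B : F) : Finset F := univ.filter fun l =>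
  ¬ ((l + 1 ≠ 0 ∧ l ≠ 0 ∧ del A B l ≠ 0) ∨ (l + 1 ≠ 0 ∧ l = 0 ∧ del A B l = 0) ∨
    (l + 1 = 0 ∧ l ≠ 0 ∧ del A B l = 0))

def Cond (A B : F) : Prop := del A B 0 = 0 ∨ del A B (-1) = 0 ∨ A * B = 0

lemma del_roots (h2 : ringChar F ≠ 2) (A B : F) : ∃ r s : F, (∀ l, del A B l = 0 → l = r ∨ l = s)
    ∧ (A * B = 0 → r = s) := by
  have h2' := two_ne h2
  by_cases h : ∃ m, A * B = m ^ 2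
  · obtain ⟨m, hm⟩ := h
    refine ⟨2 * m - A - B, -2 * m - A - B, fun l hl => ?_, fun h0 => ?_⟩
    · unfold del at hl
      rw [hm] at hl
      have : (m - (l + A + B) / 2) * (m + (l + A + B) / 2) = 0 := by linear_combination hl
      rcases mul_eq_zero.1 this with h | h
      · left; field_simp at h; linear_combination -h
      · right; field_simp at h; linear_combination h
    · rw [h0] at hm
      have : m = 0 := by simpa using hm.symm
      simp [this]
  · exact ⟨0, 0, fun l hl => (h ⟨_, sub_eq_zero.1 hl⟩).elim, fun _ => rfl⟩

lemma EE_sub (A B : F) (r s : F) (hrs : ∀ l, del A B l = 0 → l = r ∨ l = s) (l : F)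
    (hl : l ∈ EE A B) :
    (l = 0 ∧ del A B 0 ≠ 0) ∨ (l = -1 ∧ del A B (-1) ≠ 0) ∨ l = r ∨ l = s := by
  simp only [EE, Finset.mem_filter, Finset.mem_univ, true_and] at hl
  by_cases h0 : l = 0
  · subst h0; simp at hl; left; simpa using hl
  by_cases h1 : l = -1
  · subst h1; simp at hl; right; left; simpa using hl
  by_cases hd : del A B l = 0
  · right; right; exact hrs l hd
  · exact (hl (Or.inl ⟨fun h => h1 (eq_neg_of_add_eq_zero_left h), h0, hd⟩)).elim

lemma EE_card (h2 : ringChar F ≠ 2) (A B : F) : (EE A B).card ≤ 4 := by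
  obtain ⟨r, s, hrs, -⟩ := del_roots h2 A B
  refine (Finset.card_le_card (t := {0, -1, r, s}) fun l hl => ?_).trans Finset.card_le_four
  have := EE_sub A B r s hrs l hl
  simp only [Finset.mem_insert, Finset.mem_singleton]
  tauto

lemma EE_card' (h2 : ringChar F ≠ 2) (A B : F) (h : Cond A B) : (EE A B).card ≤ 3 := by
  obtain ⟨r, s, hrs, hrs'⟩ := del_roots h2 A B
  rcases h with h | h | h
  · refine (Finset.card_le_card (t := {-1, r, s}) fun l hl => ?_).trans Finset.card_le_three
    have := EE_sub A B r s hrs l hl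
    simp only [Finset.mem_insert, Finset.mem_singleton]
    tauto
  · refine (Finset.card_le_card (t := {0, r, s}) fun l hl => ?_).trans Finset.card_le_three
    have := EE_sub A B r s hrs l hl
    simp only [Finset.mem_insert, Finset.mem_singleton]
    tauto
  · refine (Finset.card_le_card (t := {0, -1, r}) fun l hl => ?_).trans Finset.card_le_three
    have := EE_sub A B r s hrs l hl
    have := hrs' h
    subst this
    simp only [Finset.mem_insert, Finset.mem_singleton]
    tauto

lemma N_low (h2 : ringChar F ≠ 2) (A B D : F) (hD : D ≠ 0) (k : ℤ) (hk : (EE A B).card ≤ k) :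
    (Fintype.card F : ℤ) ^ 3 - (k + 1) * (Fintype.card F * (Fintype.card F - 1)) ≤
    ∑ p : F × F × F × F × F, (if QA D p = 0 ∧ QB A B D p = 0 then (1:ℤ) else 0) := by
  have hq : (1:ℤ) ≤ Fintype.card F := by exact_mod_cast Fintype.card_pos
  have e1 := QA_low h2 D hD
  have e2 := pencil A B D
  have e3 : ∀ l : F, (Fintype.card F : ℤ) ^ 4 - (if l ∈ EE A B then (1:ℤ) else 0) *
      ((Fintype.card F : ℤ) ^ 2 * (Fintype.card F - 1)) ≤
      ∑ p : F × F × F × F × F, (if l * QA D p + QB A B D p = 0 then (1:ℤ) else 0) := by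
    intro l
    rw [QL h2]
    by_cases hl : l ∈ EE A B
    · rw [if_pos hl, one_mul]
      apply ZZ_low h2 _ _ _ _ hD
      by_cases h0 : l = 0
      · left; simp [h0]
      · right; simp [h0, hD]
    · rw [if_neg hl, zero_mul, sub_zero]
      apply le_of_eq
      symm
      apply ZZ_eq h2 _ _ _ _ hD
      simp only [EE, Finset.mem_filter, Finset.mem_univ, true_and, not_not] at hl
      simpa only [ne_eq, neg_eq_zero, mul_eq_zero, hD, or_false] using hl
  have e4 := Finset.sum_le_sum fun l (_ : l ∈ (univ : Finset F)) => e3 l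
  rw [Finset.sum_sub_distrib, ← Finset.sum_mul] at e4
  have e5 : ∑ l : F, (if l ∈ EE A B then (1:ℤ) else 0) = (EE A B).card := by
    rw [Finset.sum_boole]; congr 2; ext x; simp
  rw [e5, Finset.sum_const, Finset.card_univ, nsmul_eq_mul] at e4
  set N := ∑ p : F × F × F × F × F, (if QA D p = 0 ∧ QB A B D p = 0 then (1:ℤ) else 0)
  set q : ℤ := (Fintype.card F : ℤ)
  have h5 : 0 ≤ q ^ 2 * (q - 1) := mul_nonneg (by positivity) (by linarith)
  have h6 := mul_le_mul_of_nonneg_right hk h5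
  have h7 : q * (q ^ 3 - (k + 1) * (q * (q - 1))) ≤ q * N := by nlinarith
  exact le_of_mul_le_mul_left h7 (by linarith)


lemma rank_two_of (A B D : F) (t : Fin 5 → F) (h : (jacobian A B D t).rank ≠ 2) :
    ∃ s r : F, (s ≠ 0 ∨ r ≠ 0) ∧ s * t 1 + r * (2 * t 0 + (A + B) * t 1) = 0 ∧
      s * t 0 + r * ((A + B) * t 0 + 2 * A * B * t 1) = 0 ∧
      s * (-2 * t 2) + r * (-2 * t 2) = 0 ∧ s * (2 * D * t 3) = 0 ∧ r * (2 * D * t 4) = 0 := by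
  by_contra hc
  apply h
  have hli : LinearIndependent F (jacobian A B D t).row := by
    have : (jacobian A B D t).row = ![(jacobian A B D t).row 0, (jacobian A B D t).row 1] := by
      ext i j; fin_cases i <;> rfl
    rw [this, LinearIndependent.pair_iff]
    intro s r hsr
    by_contra hne
    apply hc
    refine ⟨s, r, by tauto, ?_, ?_, ?_, ?_, ?_⟩
    · simpa [jacobian] using congrFun hsr 0
    · simpa [jacobian] using congrFun hsr 1
    · simpa [jacobian] using congrFun hsr 2
    · simpa [jacobian] using congrFun hsr 3
    · simpa [jacobian] using congrFun hsr 4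
  simpa using hli.rank_matrix

lemma sqrt_cases (D A : F) (hD : D ≠ 0) : ∃ e : F, ∀ x, D * x ^ 2 = A → x = e ∨ x = -e := by
  by_cases h : ∃ e, D * e ^ 2 = A
  · obtain ⟨e, he⟩ := h
    refine ⟨e, fun x hx => ?_⟩
    have : D * ((x - e) * (x + e)) = 0 := by linear_combination hx - he
    rcases mul_eq_zero.1 ((mul_eq_zero.1 this).resolve_left hD) with h | h
    · left; exact sub_eq_zero.1 h
    · right; exact eq_neg_of_add_eq_zero_left h
  · exact ⟨0, fun x hx => (h ⟨x, hx⟩).elim⟩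

lemma kernel_zero (h2 : (2:F) ≠ 0) (A B l x y : F) (h1 : l * y + (2 * x + (A + B) * y) = 0)
    (h3 : l * x + ((A + B) * x + 2 * A * B * y) = 0) (hd : del A B l ≠ 0) : x = 0 ∧ y = 0 := by
  have hy : del A B l * y = 0 := by
    unfold del
    field_simp
    linear_combination (norm := ring_nf) 2 * h3 - (l + A + B) * h1
  have hy' := (mul_eq_zero.1 hy).resolve_left hd
  subst hy'
  refine ⟨?_, rfl⟩
  simpa [h2] using h1

lemma sing (h2 : ringChar F ≠ 2) (A B D : F) (hD : D ≠ 0) :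
    ∃ W : Finset (Fin 5 → F), W.card ≤ 5 ∧ ∀ t : Fin 5 → F, t ≠ 0 → SPoint A B D t →
      (jacobian A B D t).rank ≠ 2 → Cond A B ∧ ∃ w ∈ W, t 1 ≠ 0 ∧ t = t 1 • w := by
  have h2' := two_ne h2
  obtain ⟨e, he⟩ := sqrt_cases D A hD
  obtain ⟨f, hf⟩ := sqrt_cases 1 (-(A + B - 1) / 2) one_ne_zero
  refine ⟨{![-A, 1, 0, e, 0], ![-A, 1, 0, -e, 0], ![-(A + B - 1) / 2, 1, f, 0, 0],
    ![-(A + B - 1) / 2, 1, -f, 0, 0], ![0, 1, 0, 0, 0]}, Finset.card_le_five, ?_⟩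
  intro t ht hS hr
  obtain ⟨s, r, hne, c0, c1, c2, c3, c4⟩ := rank_two_of A B D t hr
  obtain ⟨q1, q2⟩ := hS
  have tz : ∀ (_ : t 0 = 0) (_ : t 1 = 0) (_ : t 2 = 0) (_ : t 3 = 0) (_ : t 4 = 0), False := by
    intro a0 a1 a2 a3 a4
    apply ht
    ext i; fin_cases i <;> assumption
  by_cases hr0 : r = 0
  · subst hr0
    have hs : s ≠ 0 := by simpa using hne
    simp [hs, h2', hD] at c0 c1 c2 c3
    simp [c0, c1, c2, hD] at q2
    exact (tz c1 c0 c2 c3 q2).elim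
  obtain ⟨l, rfl⟩ : ∃ l, s = r * l := ⟨s / r, by field_simp⟩
  have d0 : l * t 1 + (2 * t 0 + (A + B) * t 1) = 0 :=
    (mul_eq_zero.1 (by linear_combination c0 : r * (l * t 1 + (2 * t 0 + (A + B) * t 1)) = 0)).resolve_left hr0
  have d1 : l * t 0 + ((A + B) * t 0 + 2 * A * B * t 1) = 0 :=
    (mul_eq_zero.1 (by linear_combination c1 : r * (l * t 0 + ((A + B) * t 0 + 2 * A * B * t 1)) = 0)).resolve_left hr0
  have d2 : (l + 1) * t 2 = 0 := by
    have : r * 2 * ((l + 1) * t 2) = 0 := by linear_combination -c2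
    exact (mul_eq_zero.1 this).resolve_left (mul_ne_zero hr0 h2')
  have d3 : l * t 3 = 0 := by
    have : r * 2 * D * (l * t 3) = 0 := by linear_combination c3
    exact (mul_eq_zero.1 this).resolve_left (mul_ne_zero (mul_ne_zero hr0 h2') hD)
  have d4 : t 4 = 0 := by
    simpa [hr0, h2', hD] using c4
  clear c0 c1 c2 c3 c4 hne hr
  by_cases hl0 : l = 0
  · subst hl0
    have t2 : t 2 = 0 := by simpa using d2
    by_cases hd : del A B 0 = 0
    · have hAB : A = B := by
        unfold del at hd
        have : (A - B) ^ 2 = 0 := by field_simp at hd; linear_combination -hd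
        exact sub_eq_zero.1 (by simpa using this)
      subst hAB
      have t0 : t 0 = -A * t 1 := by
        have : 2 * (t 0 + A * t 1) = 0 := by linear_combination d0
        have := (mul_eq_zero.1 this).resolve_left h2'
        linear_combination this
      have t1 : t 1 ≠ 0 := by
        intro t1
        rw [t1, mul_zero] at t0
        simp [t1, t2, hD] at q1
        exact tz t0 t1 t2 q1 d4
      refine ⟨Or.inl hd, ?_⟩
      have h3 := he (t 3 / t 1) (by
        rw [t0, t2] at q1
        rw [div_pow, ← mul_div_assoc, div_eq_iff (pow_ne_zero 2 t1)]
        linear_combination q1)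
      rcases h3 with h3 | h3 <;> rw [div_eq_iff t1] at h3
      · refine ⟨![-A, 1, 0, e, 0], by simp, t1, ?_⟩
        ext i; fin_cases i <;> simp [t0, t2, h3, d4, mul_comm]
      · refine ⟨![-A, 1, 0, -e, 0], by simp, t1, ?_⟩
        ext i; fin_cases i <;> simp [t0, t2, h3, d4, mul_comm]
    · obtain ⟨t0, t1⟩ := kernel_zero h2' A B 0 _ _ d0 d1 hd
      simp [t1, t2, hD] at q1
      exact (tz t0 t1 t2 q1 d4).elim
  have t3 : t 3 = 0 := by simpa [hl0] using d3
  by_cases hl1 : l = -1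
  · subst hl1
    by_cases hd : del A B (-1) = 0
    · have t0 : t 0 = -(A + B - 1) / 2 * t 1 := by
        field_simp
        linear_combination d0
      have t1 : t 1 ≠ 0 := by
        intro t1
        rw [t1, mul_zero] at t0
        simp [t1, t3] at q1
        exact tz t0 t1 (by simpa using q1.symm) t3 d4
      refine ⟨Or.inr (Or.inl hd), ?_⟩
      have h3 := hf (t 2 / t 1) (by
        rw [t0, t3] at q1
        rw [div_pow, one_mul, div_eq_iff (pow_ne_zero 2 t1)]
        linear_combination -q1)
      rcases h3 with h3 | h3 <;> rw [div_eq_iff t1] at h3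
      · refine ⟨![-(A + B - 1) / 2, 1, f, 0, 0], by simp, t1, ?_⟩
        ext i; fin_cases i <;> simp [t0, t3, h3, d4, mul_comm]
      · refine ⟨![-(A + B - 1) / 2, 1, -f, 0, 0], by simp, t1, ?_⟩
        ext i; fin_cases i <;> simp [t0, t3, h3, d4, mul_comm]
    · obtain ⟨t0, t1⟩ := kernel_zero h2' A B (-1) _ _ d0 d1 hd
      simp [t1, t3] at q1
      exact (tz t0 t1 (by simpa using q1.symm) t3 d4).elim
  have t2 : t 2 = 0 := by
    refine (mul_eq_zero.1 d2).resolve_left fun h => hl1 (eq_neg_of_add_eq_zero_left h)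
  have t1 : t 1 ≠ 0 := by
    intro t1
    simp [t1, h2'] at d0
    exact tz d0 t1 t2 t3 d4
  have t0 : t 0 = 0 := by
    simp [t2, t3, t1] at q1
    exact q1
  refine ⟨Or.inr (Or.inr ?_), ![0, 1, 0, 0, 0], by simp, t1, ?_⟩
  · simp [t0, t2, d4, t1] at q2
    simpa using q2
  · ext i; fin_cases i <;> simp [t0, t2, t3, d4]

/-- reordering of coordinates -/
def coordEquiv : (Fin 5 → F) ≃ F × F × F × F × F where
  toFun t := (t 2, t 3, t 1, t 0, t 4)
  invFun p := ![p.2.2.2.1, p.2.2.1, p.1, p.2.1, p.2.2.2.2]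
  left_inv t := by ext i; fin_cases i <;> rfl
  right_inv p := rfl

open Classical in
lemma N_eq (A B D : F) :
    ∑ p : F × F × F × F × F, (if QA D p = 0 ∧ QB A B D p = 0 then (1:ℤ) else 0)
      = ((univ : Finset (Fin 5 → F)).filter fun t => SPoint A B D t).card := by
  rw [← Equiv.sum_comp coordEquiv, Finset.card_filter]
  push_cast
  refine Finset.sum_congr rfl fun t _ => if_congr ?_ rfl rfl
  simp only [QA, QB, SPoint, sub_eq_zero]
  exact Iff.rfl

open Classical in
lemma reg_le (A B D : F) :
    ((univ : Finset (Fin 5 → F)).filter fun t => t ≠ 0 ∧ SPoint A B D t ∧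
        (jacobian A B D t).rank = 2).card ≤
      (Fintype.card F - 1) * Nat.card {p : Projectivization F (Fin 5 → F) |
        ∃ (t : Fin 5 → F) (ht : t ≠ 0), p = Projectivization.mk F t ht ∧
          SPoint A B D t ∧ (jacobian A B D t).rank = 2} := by
  set P := {p : Projectivization F (Fin 5 → F) |
        ∃ (t : Fin 5 → F) (ht : t ≠ 0), p = Projectivization.mk F t ht ∧
          SPoint A B D t ∧ (jacobian A B D t).rank = 2} with hP
  have hfin : P.Finite := Set.toFinite P
  rw [Nat.card_coe_set_eq, Set.ncard_eq_toFinset_card P hfin]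
  have e1 : (1 : Fin 5 → F) ≠ 0 := one_ne_zero
  let f : (Fin 5 → F) → Projectivization F (Fin 5 → F) := fun t =>
    if ht : t ≠ 0 then Projectivization.mk F t ht else Projectivization.mk F 1 e1
  refine Finset.card_le_mul_card_image_of_maps_to (f := f) ?_ _ ?_
  · intro t ht
    simp only [Finset.mem_filter, Finset.mem_univ, true_and] at ht
    rw [Set.Finite.mem_toFinset, hP]
    exact ⟨t, ht.1, by simp [f, ht.1], ht.2⟩
  · intro b hb
    rw [Set.Finite.mem_toFinset, hP] at hb
    obtain ⟨t, ht, rfl, -⟩ := hb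
    calc _ ≤ ((univ : Finset Fˣ).image fun a => a • t).card := by
          apply Finset.card_le_card
          intro t' ht'
          simp only [Finset.mem_filter, Finset.mem_univ, true_and] at ht'
          obtain ⟨⟨h0, -⟩, h1⟩ := ht'
          simp only [f, dif_pos h0] at h1
          obtain ⟨a, ha⟩ := (Projectivization.mk_eq_mk_iff F _ _ h0 ht).1 h1
          simp only [Finset.mem_image, Finset.mem_univ, true_and]
          exact ⟨a, ha⟩
      _ ≤ (univ : Finset Fˣ).card := Finset.card_image_le
      _ = Fintype.card F - 1 := by rw [Finset.card_univ, Fintype.card_units]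

open Classical in
lemma sing_card (h2 : ringChar F ≠ 2) (A B D : F) (hD : D ≠ 0) :
    (((univ : Finset (Fin 5 → F)).filter fun t => t ≠ 0 ∧ SPoint A B D t ∧
        (jacobian A B D t).rank ≠ 2).card ≤ 5 * (Fintype.card F - 1)) ∧
    (¬ Cond A B → ((univ : Finset (Fin 5 → F)).filter fun t => t ≠ 0 ∧ SPoint A B D t ∧
        (jacobian A B D t).rank ≠ 2).card = 0) := by
  obtain ⟨W, hW, h⟩ := sing h2 A B D hD
  constructor
  · calc _ ≤ ((W ×ˢ (univ : Finset Fˣ)).image fun a => a.2 • a.1).card := by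
          apply Finset.card_le_card
          intro t ht
          simp only [Finset.mem_filter, Finset.mem_univ, true_and] at ht
          obtain ⟨-, w, hw, h1, h3⟩ := h t ht.1 ht.2.1 ht.2.2
          rw [Finset.mem_image]
          exact ⟨(w, Units.mk0 _ h1), by simp [hw], h3.symm⟩
      _ ≤ (W ×ˢ (univ : Finset Fˣ)).card := Finset.card_image_le
      _ = W.card * (Fintype.card F - 1) := by
          rw [Finset.card_product, Finset.card_univ, Fintype.card_units]
      _ ≤ _ := Nat.mul_le_mul_right _ hW
  · intro hc
    rw [Finset.card_eq_zero, Finset.filter_eq_empty_iff]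
    intro t _ ht
    exact hc (h t ht.1 ht.2.1 ht.2.2).1

open Classical in
lemma split_card (A B D : F) :
    ((univ : Finset (Fin 5 → F)).filter fun t => SPoint A B D t).card ≤ 1 +
    ((univ : Finset (Fin 5 → F)).filter fun t => t ≠ 0 ∧ SPoint A B D t ∧
        (jacobian A B D t).rank = 2).card +
    ((univ : Finset (Fin 5 → F)).filter fun t => t ≠ 0 ∧ SPoint A B D t ∧
        (jacobian A B D t).rank ≠ 2).card := by
  refine le_trans (Finset.card_le_card (t := ({0} ∪ (univ : Finset (Fin 5 → F)).filter fun t =>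
      t ≠ 0 ∧ SPoint A B D t ∧ (jacobian A B D t).rank = 2) ∪
    ((univ : Finset (Fin 5 → F)).filter fun t => t ≠ 0 ∧ SPoint A B D t ∧
        (jacobian A B D t).rank ≠ 2)) ?_) ?_
  · intro t ht
    simp only [Finset.mem_filter, Finset.mem_univ, true_and, Finset.mem_union,
      Finset.mem_singleton] at ht ⊢
    tauto
  · refine (Finset.card_union_le _ _).trans (Nat.add_le_add_right ?_ _)
    refine (Finset.card_union_le _ _).trans ?_
    simp

end

/-- Over a finite field `F` with `ℓ := #F ≥ 5` elements of characteristic `≠ 2`, for any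
`A, B, D ∈ F` with `D ≠ 0`, the number of regular points of `S^{(D;A,B)}` in `P⁴(F)` is
at least `ℓ² − 4ℓ + 1`. -/
theorem count_regular_points_over_finite_field (F : Type*) [Field F] [Fintype F]
    (hchar : ringChar F ≠ 2) (hcard : 5 ≤ Fintype.card F) (A B D : F) (hD : D ≠ 0) :
    (Fintype.card F : ℤ) ^ 2 - 4 * (Fintype.card F : ℤ) + 1 ≤
      Nat.card {p : Projectivization F (Fin 5 → F) |
        ∃ (t : Fin 5 → F) (ht : t ≠ 0), p = Projectivization.mk F t ht ∧
          SPoint A B D t ∧ (jacobian A B D t).rank = 2} := by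
  classical
  have e1 := reg_le A B D
  obtain ⟨e2, e2'⟩ := sing_card hchar A B D hD
  have e3 := split_card A B D
  have hN := N_eq A B D
  have hq1 : 1 ≤ Fintype.card F := by omega
  have n3 := fun h => N_low hchar A B D hD 3 (by exact_mod_cast EE_card' hchar A B h)
  have n4 := N_low hchar A B D hD 4 (by exact_mod_cast EE_card hchar A B)
  rw [hN] at n3 n4
  clear hN
  generalize Nat.card {p : Projectivization F (Fin 5 → F) |
        ∃ (t : Fin 5 → F) (ht : t ≠ 0), p = Projectivization.mk F t ht ∧
          SPoint A B D t ∧ (jacobian A B D t).rank = 2} = P at *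
  generalize Finset.card _ = R at e1 e3
  generalize Finset.card _ = S at e2 e2' e3
  generalize Finset.card _ = N at e3 n3 n4
  zify [hq1] at e1 e2 e2' e3 hcard
  generalize (Fintype.card F : ℤ) = q at *
  have key : (q - 1) * (q ^ 2 - 4 * q + 1) ≤ (q - 1) * P := by
    by_cases hc : Cond A B
    · have := n3 hc
      nlinarith
    · have := e2' hc
      nlinarith
  exact le_of_mul_le_mul_left key (by linarith)
end
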